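/- For all half-integers m, n ∈ ℤ + 1/2 the modified (charged) vertex operator components satisfy the Clifford algebra (fermionic anticommutation) relations on Λ ⊗ ℚ[ℤα]: S̄_m S̄_n + S̄_n S̄_m = 0, S̄*_m S̄*_n + S̄*_n S̄*_m = 0, and S̄_m S̄*_n + S̄*_n S̄_m = δ_{m,n}·id. -/

import Mathlib

/-!
The proof is the usual vertex operator calculus, carried out with finite sums.

For a sign `ε = ±1` let `g^ε_k` be the coefficients of `exp (ε ∑ p_n zⁿ / n)`, so that
`g^1_k = h_k` and `g^{-1}_k = (-1)^k e_k`. The series `∑ g^δ_i(∂) tⁱ = exp (δ ∑ tⁿ ∂/∂p_n)` is the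
translation `p_n ↦ p_n + δ tⁿ` (`tau`, `TT_eq`), an algebra homomorphism `Λ → Λ[t]`. Hence both
families are instances of one operator `V^ε_a = ∑_j g^ε_{j-a} · T^{-ε}_j` (`VV`), where `T^δ_j` is
the `j`-th coefficient of the translation: `S_n = V^1_n` and `S*_n = V^{-1}_{-n}`.

The translation multiplies the series of `g^ε` by `1 - t z` or by `1 / (1 - t z)`, according to
whether its sign is opposite or equal to `ε` (`tau_genSer_neg`, `tau_genSer_self`). With
`F(a, b)` the normally ordered product (`FF`), which is symmetric in its two factors, this gives

* `V^ε_a V^ε_b = F(a, b) - F(a - 1, b + 1)`, hence `V^ε_a V^ε_b + V^ε_{b+1} V^ε_{a-1} = 0`;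
* `V^ε_a V^{-ε}_b = ∑_{l ≥ 0} F(a - l, b + l)`, so that
  `V^ε_a V^{-ε}_b + V^{-ε}_{b-1} V^ε_{a+1} = ∑_{l ∈ ℤ} F(a - l, b + l)`. Since the series of
  `g^ε` and `g^{-ε}` are inverse to each other, and so are the two translations, this sum is
  `δ_{a+b,0}` (`VV_VV_mixed`).

The charge `e^{mα}` shifts the indices so that these are exactly the Clifford relations.
-/

open MvPolynomial

noncomputable section

/-- The ring of symmetric functions `Λ = ℚ[p₁,p₂,…]`, with the variable `X n`
(for `n : ℕ+`) playing the role of the power sum `p_n`. -/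
abbrev Lam : Type := MvPolynomial ℕ+ ℚ

/-- The power sum `p_n`. -/
def pp (n : ℕ+) : Lam := X n

/-- The family `g` with generating function `∑_k g_k t^k = exp (∑_{n≥1} c n · p_n tⁿ / n)`,
characterized by `g 0 = 1` together with the recursion obtained by differentiating the
generating function:  `(k+1) · g (k+1) = ∑_{i=0}^{k} c (i+1) · p_{i+1} · g (k-i)`. -/
def genFam (c : ℕ → ℚ) : ℕ → Lam
  | 0 => 1
  | (k+1) => (((k : ℚ) + 1)⁻¹) •
      ∑ i ∈ Finset.range (k+1), c (i+1) • (pp ⟨i+1, Nat.succ_pos i⟩ * genFam c (k - i))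
  decreasing_by exact Nat.lt_succ_of_le (Nat.sub_le k i)

/-- The complete homogeneous symmetric function `h_k`,
with generating function `exp (∑ p_n tⁿ/n)`. -/
def hh : ℕ → Lam := genFam fun _ => 1

/-- The elementary symmetric function `e_k`,
with generating function `exp (∑ (−1)^{n−1} p_n tⁿ/n)`. -/
def ee : ℕ → Lam := genFam fun n => (-1)^(n+1)

/-- `h` indexed by `ℤ` (zero for negative indices). -/
def hZ (n : ℤ) : Lam := if 0 ≤ n then hh n.toNat else 0

/-- `e` indexed by `ℤ` (zero for negative indices). -/
def eZ (n : ℤ) : Lam := if 0 ≤ n then ee n.toNat else 0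

/-- The differential operator `∏_i (i·∂/∂p_i)^(α i)` (the factors commute,
so the sorted product is the canonical one). -/
def monOp (α : ℕ+ →₀ ℕ) : Module.End ℚ Lam :=
  ((α.support.sort (· ≤ ·)).map fun (i : ℕ+) => (((i : ℕ) : ℚ) • (pderiv i).toLinearMap) ^ (α i)).prod

/-- `f(∂) P`: substitute `p_i ↦ i·∂/∂p_i` in `f` and apply the result to `P`. -/
def Dop (f : Lam) (P : Lam) : Lam := ∑ α ∈ f.support, f.coeff α • monOp α P

/-- A bound for the weighted degree (`p_i` of weight `i`) of `P`;
`e_j(∂) P = 0 = h_j(∂) P` whenever `j > wbound P`. -/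
def wbound (P : Lam) : ℕ := P.support.sup fun α => α.sum fun i k => (i : ℕ) * k

/-- The vertex operator component `S_n = ∑_{j ≥ max(0,n)} (−1)^j h_{j−n} · e_j(∂)`;
on a given polynomial only the (finitely many) terms with `j ≤ wbound P` act nontrivially. -/
def Sop (n : ℤ) (P : Lam) : Lam :=
  ∑ j ∈ Finset.range (wbound P + 1),
    if n ≤ (j : ℤ) then ((-1 : ℚ)) ^ j • (hZ ((j : ℤ) - n) * Dop (ee j) P) else 0

/-- The dual vertex operator component `S*_n = ∑_{j ≥ max(0,−n)} (−1)^{j+n} e_{j+n} · h_j(∂)`. -/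
def SstarOp (n : ℤ) (P : Lam) : Lam :=
  ∑ j ∈ Finset.range (wbound P + 1),
    if -n ≤ (j : ℤ) then ((-1 : ℚ)) ^ ((j : ℤ) + n) • (eZ ((j : ℤ) + n) * Dop (hh j) P) else 0

/-- The Schur function of an arbitrary integer tuple, via the Jacobi–Trudi determinant
`s_ρ = det (h_{ρ_i − i + j})`. -/
def schur {l : ℕ} (ρ : Fin l → ℤ) : Lam :=
  (Matrix.of fun i j : Fin l => hZ (ρ i - (i.1 : ℤ) + (j.1 : ℤ))).det

/-- The dual Schur function of an integer tuple, `s_{ρ'} = det (e_{ρ_i − i + j})`. -/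
def schurE {l : ℕ} (ρ : Fin l → ℤ) : Lam :=
  (Matrix.of fun i j : Fin l => eZ (ρ i - (i.1 : ℤ) + (j.1 : ℤ))).det


/-- The space `Λ ⊗ ℚ[ℤα]`, realized as finitely supported functions `ℤ →₀ Λ`;
`Finsupp.single m P` represents `P ⊗ e^{mα}`. -/
abbrev VSp : Type := ℤ →₀ Lam

/-- The charged vertex operator component `S̄_{r+1/2}` (half-integers `n ∈ ℤ + 1/2` are
parameterized as `n = r + 1/2`, `r : ℤ`):
`S̄_{r+1/2} (v ⊗ e^{mα}) = S_{(r+1/2)+m+1/2} v ⊗ e^{(m+1)α} = S_{r+m+1} v ⊗ e^{(m+1)α}`. -/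
def Sbar (r : ℤ) (w : VSp) : VSp :=
  w.sum fun m P => Finsupp.single (m+1) (Sop (r + m + 1) P)

/-- The charged dual vertex operator component `S̄*_{r+1/2}`:
`S̄*_{r+1/2} (v ⊗ e^{mα}) = S*_{(r+1/2)+m−1/2} v ⊗ e^{(m−1)α} = S*_{r+m} v ⊗ e^{(m−1)α}`. -/
def SbarStar (r : ℤ) (w : VSp) : VSp :=
  w.sum fun m P => Finsupp.single (m-1) (SstarOp (r + m) P)

/-! ### Generating series -/

/-- `gen ε k` is the coefficient of `t^k` in `exp (ε ∑ p_n tⁿ / n)`. -/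
def gen (ε : ℚ) : ℕ → Lam := genFam fun _ => ε

/-- `gen ε` extended by zero to negative indices. -/
def genZ (ε : ℚ) (k : ℤ) : Lam := if 0 ≤ k then gen ε k.toNat else 0

lemma genZ_natCast (ε : ℚ) (k : ℕ) : genZ ε k = gen ε k := by simp [genZ]

lemma genZ_neg (ε : ℚ) {k : ℤ} (hk : k < 0) : genZ ε k = 0 := by
  simp [genZ, hk]

lemma gen_zero (ε : ℚ) : gen ε 0 = 1 := by simp [gen, genFam]

lemma gen_succ (ε : ℚ) (k : ℕ) :
    ((k : ℚ) + 1) • gen ε (k + 1) =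
      ∑ i ∈ Finset.range (k + 1), ε • (pp i.succPNat * gen ε (k - i)) := by
  have hk : ((k : ℚ) + 1) ≠ 0 := by positivity
  rw [gen, genFam, smul_smul, mul_inv_cancel₀ hk, one_smul]
  rfl

lemma hh_eq (k : ℕ) : hh k = gen 1 k := rfl

/-- Up to the sign `(-1)^k`, the `e_k` have generating series `exp (-∑ p_n tⁿ / n)`. -/
lemma ee_eq (k : ℕ) : (-1 : ℚ) ^ k • ee k = gen (-1) k := by
  induction k using Nat.strong_induction_on with
  | _ k ih =>
    cases k with
    | zero => simp [ee, gen, genFam]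
    | succ k =>
      rw [ee, gen, genFam, genFam, smul_comm, Finset.smul_sum]
      congr 1
      refine Finset.sum_congr rfl fun i hi => ?_
      have hi' : i ≤ k := Nat.lt_succ_iff.mp (Finset.mem_range.mp hi)
      have := ih (k - i) (by omega)
      rw [gen, ee] at this
      rw [← this, mul_smul_comm, smul_smul, smul_smul]
      congr 1
      obtain ⟨d, rfl⟩ := Nat.exists_eq_add_of_le hi'
      rw [Nat.add_sub_cancel_left]
      ring_nf
      rw [pow_mul']
      ring_nf

/-- The generating series of `gen ε`. -/
def genSer (ε : ℚ) : PowerSeries Lam := PowerSeries.mk (gen ε)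

/-- The series `∑ p_{n+1} z^n`. -/
def pSer : PowerSeries Lam := PowerSeries.mk fun i => pp i.succPNat

lemma deriv_genSer (ε : ℚ) :
    PowerSeries.derivative Lam (genSer ε) = (ε • pSer) * genSer ε := by
  ext1 k
  rw [PowerSeries.coeff_derivative, PowerSeries.coeff_mul,
    Finset.Nat.sum_antidiagonal_eq_sum_range_succ_mk]
  have := gen_succ ε k
  simp only [genSer, pSer, PowerSeries.coeff_mk, PowerSeries.coeff_smul, smul_mul_assoc]
  rw [← this, Algebra.smul_def, mul_comm]
  simp

/-- A linear first order differential equation `Y' = A Y` over a `ℚ`-algebra has at most one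
power series solution with given constant term. -/
lemma ode_unique {R : Type*} [CommRing R] [Algebra ℚ R] (A Y Z : PowerSeries R)
    (hY : PowerSeries.derivative R Y = A * Y) (hZ : PowerSeries.derivative R Z = A * Z)
    (h0 : PowerSeries.coeff 0 Y = PowerSeries.coeff 0 Z) : Y = Z := by
  ext1 k
  induction k using Nat.strong_induction_on with
  | _ k ih =>
    cases k with
    | zero => exact h0
    | succ k =>
      have e1 := congrArg (PowerSeries.coeff k) hY
      have e2 := congrArg (PowerSeries.coeff k) hZ
      rw [PowerSeries.coeff_derivative,
        PowerSeries.coeff_mul] at e1 e2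
      have e3 : PowerSeries.coeff (k + 1) Y * ((k : R) + 1) =
          PowerSeries.coeff (k + 1) Z * ((k : R) + 1) := by
        rw [e1, e2]
        refine Finset.sum_congr rfl fun x hx => ?_
        rw [ih x.2 (by have := Finset.HasAntidiagonal.mem_antidiagonal.mp hx; omega)]
      have hu : IsUnit ((k : R) + 1) := by
        have : IsUnit ((k : ℚ) + 1) := IsUnit.mk0 _ (by positivity)
        simpa using this.map (algebraMap ℚ R)
      exact hu.mul_left_injective e3

lemma genSer_mul (ε : ℚ) : genSer ε * genSer (-ε) = 1 := by
  apply ode_unique 0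
  · rw [Derivation.leibniz, deriv_genSer, deriv_genSer]
    simp only [smul_eq_mul, neg_smul]
    ring
  · simp
  · simp [genSer, gen_zero]

lemma sum_gen_mul (ε : ℚ) (k : ℕ) :
    ∑ x ∈ Finset.HasAntidiagonal.antidiagonal k, gen ε x.1 * gen (-ε) x.2 = if k = 0 then 1 else 0 := by
  have := congrArg (PowerSeries.coeff k) (genSer_mul ε)
  rw [PowerSeries.coeff_mul, PowerSeries.coeff_one] at this
  simpa [genSer] using this

/-! ### Translation of the power sums -/

/-- The translation `p_n ↦ p_n + δ tⁿ`, i.e. `exp (δ ∑ tⁿ ∂/∂p_n)`. -/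
def tau (δ : ℚ) : Lam →ₐ[ℚ] Polynomial Lam :=
  aeval fun n : ℕ+ => Polynomial.C (X n) + δ • (Polynomial.X : Polynomial Lam) ^ (n : ℕ)

lemma tau_X (δ : ℚ) (n : ℕ+) : tau δ (X n) =
    Polynomial.C (X n) + δ • (Polynomial.X : Polynomial Lam) ^ (n : ℕ) := by
  simp [tau]

/-- The geometric series `∑ t^{i+1} z^i = t / (1 - t z)`. -/
def geo : PowerSeries (Polynomial Lam) := PowerSeries.mk fun i => Polynomial.X ^ (i + 1)

lemma geo_mul : (1 - PowerSeries.C Polynomial.X * PowerSeries.X) * geo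
    = PowerSeries.C Polynomial.X := by
  ext1 k
  cases k with
  | zero =>
    simp [geo, sub_mul, mul_assoc]
  | succ k =>
    rw [sub_mul, one_mul, mul_assoc, map_sub, PowerSeries.coeff_C_mul,
      PowerSeries.coeff_succ_X_mul]
    simp [geo]
    ring

lemma deriv_mul_ser {R : Type*} [CommRing R] (Y Z : PowerSeries R) :
    PowerSeries.derivative R (Y * Z) =
      Y * PowerSeries.derivative R Z + Z * PowerSeries.derivative R Y := by
  rw [Derivation.leibniz, smul_eq_mul, smul_eq_mul]

lemma deriv_one_sub {R : Type*} [CommRing R] (a : R) :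
    PowerSeries.derivative R (1 - PowerSeries.C a * PowerSeries.X) = -PowerSeries.C a := by
  rw [map_sub, deriv_mul_ser]
  simp

lemma map_derivative {R S : Type*} [CommRing R] [CommRing S] (f : R →+* S) (Y : PowerSeries R) :
    PowerSeries.derivative S (PowerSeries.map f Y) =
      PowerSeries.map f (PowerSeries.derivative R Y) := by
  ext1 k
  simp [PowerSeries.coeff_derivative]

lemma map_pSer (δ : ℚ) : PowerSeries.map (tau δ).toRingHom pSer =
    PowerSeries.map Polynomial.C pSer + δ • geo := by
  ext1 k
  simpa [pSer, geo, pp] using tau_X δ k.succPNat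

lemma map_smulQ {R S : Type*} [CommRing R] [CommRing S] [Algebra ℚ R] [Algebra ℚ S]
    (f : R →+* S) (q : ℚ) (Y : PowerSeries R) :
    PowerSeries.map f (q • Y) = q • PowerSeries.map f Y := by
  ext1 k
  simp [map_rat_smul]

/-- Translating by the opposite sign multiplies the series `exp (ε ∑ p_n zⁿ / n)` by `1 - t z`. -/
lemma tau_genSer_neg (ε : ℚ) (hε : ε * ε = 1) :
    PowerSeries.map (tau (-ε)).toRingHom (genSer ε) =
      (1 - PowerSeries.C Polynomial.X * PowerSeries.X) *
        PowerSeries.map Polynomial.C (genSer ε) := by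
  apply ode_unique (ε • PowerSeries.map Polynomial.C pSer - geo)
  · rw [map_derivative, deriv_genSer, map_mul, map_smulQ, map_pSer, smul_add, smul_smul]
    rw [mul_neg, hε, neg_one_smul, sub_eq_add_neg]
  · rw [deriv_mul_ser, deriv_one_sub, map_derivative, deriv_genSer, map_mul, map_smulQ]
    linear_combination PowerSeries.map Polynomial.C (genSer ε) * geo_mul
  · have h := PowerSeries.coeff_map (tau (-ε)).toRingHom 0 (genSer ε)
    have h' := PowerSeries.coeff_map (Polynomial.C : Lam →+* _) 0 (genSer ε)
    simp only [genSer, PowerSeries.coeff_mk, gen_zero, map_one] at h h'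
    rw [PowerSeries.coeff_zero_eq_constantCoeff_apply] at h h' ⊢
    rw [PowerSeries.coeff_zero_eq_constantCoeff_apply, map_mul, genSer, h, h']
    simp

/-- Translating by the same sign divides the series `exp (ε ∑ p_n zⁿ / n)` by `1 - t z`. -/
lemma tau_genSer_self (ε : ℚ) (hε : ε * ε = 1) :
    (1 - PowerSeries.C Polynomial.X * PowerSeries.X) *
      PowerSeries.map (tau ε).toRingHom (genSer ε) =
        PowerSeries.map Polynomial.C (genSer ε) := by
  apply ode_unique (ε • PowerSeries.map Polynomial.C pSer)
  · rw [deriv_mul_ser, deriv_one_sub, map_derivative, deriv_genSer, map_mul, map_smulQ, map_pSer, smul_add,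
      smul_smul, hε, one_smul]
    linear_combination PowerSeries.map (tau ε).toRingHom (genSer ε) * geo_mul
  · rw [map_derivative, deriv_genSer, map_mul, map_smulQ]
  · have h := PowerSeries.coeff_map (tau ε).toRingHom 0 (genSer ε)
    have h' := PowerSeries.coeff_map (Polynomial.C : Lam →+* _) 0 (genSer ε)
    simp only [genSer, PowerSeries.coeff_mk, gen_zero, map_one] at h h'
    rw [PowerSeries.coeff_zero_eq_constantCoeff_apply] at h h' ⊢
    rw [PowerSeries.coeff_zero_eq_constantCoeff_apply, map_mul, genSer, h, h']
    simp

lemma tau_genZ_neg (ε : ℚ) (hε : ε * ε = 1) (k : ℤ) :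
    tau (-ε) (genZ ε k) =
      Polynomial.C (genZ ε k) - Polynomial.X * Polynomial.C (genZ ε (k - 1)) := by
  rcases lt_or_ge k 0 with hk | hk
  · simp [genZ_neg ε hk, genZ_neg ε (show k - 1 < 0 by omega)]
  lift k to ℕ using hk
  have := congrArg (PowerSeries.coeff k) (tau_genSer_neg ε hε)
  rw [sub_mul, one_mul, mul_assoc, map_sub, PowerSeries.coeff_C_mul] at this
  cases k with
  | zero => simp [genZ, gen_zero]
  | succ k =>
    rw [PowerSeries.coeff_succ_X_mul] at this
    have hc : ((k + 1 : ℕ) : ℤ) - 1 = (k : ℕ) := by simp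
    rw [hc, genZ_natCast, genZ_natCast]
    simp only [PowerSeries.coeff_map, genSer, PowerSeries.coeff_mk] at this
    exact this

lemma tau_genZ_self (ε : ℚ) (hε : ε * ε = 1) (k : ℤ) :
    tau ε (genZ ε k) - Polynomial.X * tau ε (genZ ε (k - 1)) = Polynomial.C (genZ ε k) := by
  rcases lt_or_ge k 0 with hk | hk
  · simp [genZ_neg ε hk, genZ_neg ε (show k - 1 < 0 by omega)]
  lift k to ℕ using hk
  have := congrArg (PowerSeries.coeff k) (tau_genSer_self ε hε)
  rw [sub_mul, one_mul, mul_assoc, map_sub, PowerSeries.coeff_C_mul] at this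
  cases k with
  | zero => simp [genZ, gen_zero]
  | succ k =>
    rw [PowerSeries.coeff_succ_X_mul] at this
    have hc : ((k + 1 : ℕ) : ℤ) - 1 = (k : ℕ) := by simp
    rw [hc, genZ_natCast, genZ_natCast]
    simp only [PowerSeries.coeff_map, genSer, PowerSeries.coeff_mk] at this
    exact this

/-! ### Differential operators as coefficients of translations -/

/-- The operator `n ∂/∂p_n`. -/
def bOp (n : ℕ+) : Module.End ℚ Lam := ((n : ℕ) : ℚ) • (pderiv n).toLinearMap

lemma bOp_comm (m n : ℕ+) : bOp m * bOp n = bOp n * bOp m := by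
  have h : ((pderiv m).toLinearMap : Module.End ℚ Lam) * (pderiv n).toLinearMap =
      (pderiv n).toLinearMap * ((pderiv m).toLinearMap : Module.End ℚ Lam) := by
    have h0 : ⁅(pderiv m : Derivation ℚ Lam Lam), (pderiv n : Derivation ℚ Lam Lam)⁆ = 0 := by
      apply MvPolynomial.derivation_ext
      intro i
      rw [Derivation.commutator_apply, pderiv_X, pderiv_X, Pi.single_apply, Pi.single_apply]
      split_ifs <;> simp
    refine LinearMap.ext fun P => ?_
    have := congrArg (fun D : Derivation ℚ Lam Lam => D P) h0
    simp only [Derivation.commutator_apply] at this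
    exact sub_eq_zero.mp this
  simp only [bOp, smul_mul_assoc, mul_smul_comm, h]
  rw [smul_comm]

/-- The substitution `p_n ↦ n ∂/∂p_n` is an algebra homomorphism because these operators
commute, and it computes `Dop`. -/
lemma exists_hom : ∃ Φ : Lam →ₐ[ℚ] Module.End ℚ Lam,
    (∀ n, Φ (X n) = bOp n) ∧ ∀ f P, Dop f P = Φ f P := by
  have hc : ∀ a ∈ Set.range bOp, ∀ b ∈ Set.range bOp, a * b = b * a := by
    rintro _ ⟨m, rfl⟩ _ ⟨n, rfl⟩
    exact bOp_comm m n
  have hcomm := Algebra.isMulCommutative_adjoin ℚ hc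
  let : CommRing (Algebra.adjoin ℚ (Set.range bOp)) :=
    { (inferInstance : Ring (Algebra.adjoin ℚ (Set.range bOp))) with
      mul_comm := fun x y => hcomm.is_comm.comm x y }
  let a : ℕ+ → Algebra.adjoin ℚ (Set.range bOp) :=
    fun n => ⟨bOp n, Algebra.subset_adjoin ⟨n, rfl⟩⟩
  let Ψ : Lam →ₐ[ℚ] Algebra.adjoin ℚ (Set.range bOp) := aeval a
  refine ⟨(Subalgebra.val _).comp Ψ, fun n => by simp [Ψ, a], fun f P => ?_⟩
  have h1 : ∀ α : ℕ+ →₀ ℕ, monOp α = (Subalgebra.val _) (∏ i ∈ α.support, a i ^ α i) := by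
    intro α
    have h2 : (∏ i ∈ α.support, a i ^ α i) =
        ((α.support.sort (· ≤ ·)).map fun i => a i ^ α i).prod := by
      rw [Finset.prod, ← Finset.sort_eq α.support (· ≤ ·), Multiset.map_coe, Multiset.prod_coe]
    rw [h2, map_list_prod, List.map_map]
    rfl
  have h3 : Ψ f = ∑ α ∈ f.support, f.coeff α • ∏ i ∈ α.support, a i ^ α i := by
    simp only [Ψ, aeval_def, eval₂_eq, Algebra.smul_def]
  rw [AlgHom.comp_apply, h3, map_sum, LinearMap.sum_apply, Dop]
  refine Finset.sum_congr rfl fun α _ => ?_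
  rw [map_smul, ← h1]
  rfl

/-- The algebra homomorphism `f ↦ f(∂)`. -/
def Phi : Lam →ₐ[ℚ] Module.End ℚ Lam := exists_hom.choose

lemma Phi_X (n : ℕ+) : Phi (X n) = bOp n := exists_hom.choose_spec.1 n

lemma Dop_eq (f P : Lam) : Dop f P = Phi f P := exists_hom.choose_spec.2 f P

/-- Chain rule for `d/dt` of the translation, modulo `t^(K+1)`; the truncation keeps the
sum over the variables finite. -/
lemma deriv_tau (δ : ℚ) (K : ℕ) (P : Lam) :
    (Polynomial.X : Polynomial Lam) ^ (K + 1) ∣ Polynomial.derivative (tau δ P) -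
      ∑ i ∈ Finset.range (K + 1), (δ • (Polynomial.X : Polynomial Lam) ^ i) *
        tau δ (bOp i.succPNat P) := by
  induction P using MvPolynomial.induction_on with
  | C a =>
    have h : tau δ (C a) = Polynomial.C (C a) := by
      rw [← MvPolynomial.algebraMap_eq, AlgHom.commutes]; rfl
    rw [h]
    simp [bOp]
  | add P Q hP hQ =>
    convert dvd_add hP hQ using 1
    simp only [map_add, mul_add, Finset.sum_add_distrib]
    ring
  | mul_X P n hP =>
    have hX : (Polynomial.X : Polynomial Lam) ^ (K + 1) ∣ Polynomial.derivative (tau δ (X n)) -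
      ∑ i ∈ Finset.range (K + 1), (δ • (Polynomial.X : Polynomial Lam) ^ i) *
        tau δ (bOp i.succPNat (X n)) := by
      have e1 : Polynomial.derivative (tau δ (X n)) =
          (((n : ℕ) : ℚ) * δ) • (Polynomial.X : Polynomial Lam) ^ ((n : ℕ) - 1) := by
        rw [tau_X, map_add, Polynomial.derivative_C, zero_add, Polynomial.derivative_smul,
          Polynomial.derivative_X_pow, mul_comm, mul_smul]
        rw [Algebra.smul_def ((n : ℕ) : ℚ), mul_comm]
        simp
      have e2 : ∀ i, tau δ (bOp i.succPNat (X n)) =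
          if i = (n : ℕ) - 1 then algebraMap ℚ (Polynomial Lam) ((n : ℕ) : ℚ) else 0 := by
        intro i
        have hn := n.pos
        by_cases hi : i = (n : ℕ) - 1
        · have : i.succPNat = n := by
            apply PNat.eq; simp; omega
          rw [if_pos hi, this, bOp, LinearMap.smul_apply]
          simp [Algebra.smul_def]
        · have : i.succPNat ≠ n := by
            intro h; apply hi; rw [← h]; simp
          rw [if_neg hi, bOp, LinearMap.smul_apply]
          simp [pderiv_X_of_ne this.symm]
      simp only [e1, e2, mul_ite, mul_zero, Finset.sum_ite_eq', Finset.mem_range]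
      split_ifs with h
      · rw [← Algebra.commutes, ← Algebra.smul_def, smul_smul, sub_self]
        exact dvd_zero _
      · rw [sub_zero]
        rw [Algebra.smul_def]
        exact (pow_dvd_pow _ (by omega)).mul_left _
    convert dvd_add (hP.mul_right (tau δ (X n))) (hX.mul_left (tau δ P)) using 1
    have e3 : ∀ i : ℕ+, bOp i (P * X n) = P * bOp i (X n) + X n * bOp i P := by
      intro i
      simp only [bOp, LinearMap.smul_apply, Derivation.coeFn_coe, Derivation.leibniz,
        smul_eq_mul, smul_add, mul_smul_comm]
    simp only [e3, map_mul, map_add, Polynomial.derivative_mul, mul_add, Finset.sum_add_distrib,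
      mul_sub, sub_mul, Finset.mul_sum, Finset.sum_mul]
    have e4 : ∀ A B D : Polynomial Lam, A * (B * D) = B * (A * D) := fun A B D => by ring
    have e5 : ∀ A B D : Polynomial Lam, A * B * D = A * (D * B) := fun A B D => by ring
    simp only [e4 (tau δ P) (_ • _) _, e5 (_ • _) _ _]
    ring

/-- The coefficient of `t^i` in the translation `p_n ↦ p_n + δ tⁿ`. -/
def TT (δ : ℚ) (i : ℕ) (P : Lam) : Lam := (tau δ P).coeff i

/-- The coefficients of the translation are the operators `g(∂)`, for `g` the coefficients of
`exp (δ ∑ p_n tⁿ / n)`: both satisfy the same recursion. -/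
lemma TT_eq (δ : ℚ) (i : ℕ) (P : Lam) : TT δ i P = Phi (gen δ i) P := by
  induction i using Nat.strong_induction_on generalizing P with
  | _ k ih =>
    cases k with
    | zero =>
      rw [gen_zero, map_one, Module.End.one_apply, TT]
      have : ((Polynomial.aeval (0 : Lam)).toRingHom.comp (tau δ).toRingHom) =
          RingHom.id Lam := by
        apply MvPolynomial.ringHom_ext
        · intro r
          have h : tau δ (C r) = Polynomial.C (C r) := by
            rw [← MvPolynomial.algebraMap_eq, AlgHom.commutes]; rfl
          simp [h]
        · intro n
          simp [tau_X, Algebra.smul_def]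
      have := congrArg (fun f : Lam →+* Lam => f P) this
      simp only [RingHom.comp_apply, RingHom.id_apply] at this
      rw [Polynomial.coeff_zero_eq_aeval_zero]
      exact this
    | succ k =>
      have hk : ((k : ℚ) + 1) ≠ 0 := by positivity
      apply smul_right_injective _ hk
      show ((k : ℚ) + 1) • TT δ (k + 1) P = ((k : ℚ) + 1) • Phi (gen δ (k + 1)) P
      rw [← LinearMap.smul_apply, ← map_smul, gen_succ, map_sum, LinearMap.sum_apply]
      have h := Polynomial.X_pow_dvd_iff.mp (deriv_tau δ k P) k (Nat.lt_succ_self k)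
      rw [Polynomial.coeff_sub, sub_eq_zero, Polynomial.coeff_derivative,
        Polynomial.finsetSum_coeff] at h
      rw [TT, Algebra.smul_def, mul_comm]
      simp only [map_add, map_natCast, map_one]
      rw [h]
      refine Finset.sum_congr rfl fun i hi => ?_
      have hi' : i ≤ k := Nat.lt_succ_iff.mp (Finset.mem_range.mp hi)
      rw [smul_mul_assoc, Polynomial.coeff_smul, Polynomial.coeff_X_pow_mul', if_pos hi',
        map_smul, LinearMap.smul_apply, mul_comm (pp _), map_mul, Module.End.mul_apply, pp, Phi_X,
        ← ih (k - i) (by omega)]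
      rfl

lemma TT_comm (δ η : ℚ) (i j : ℕ) (P : Lam) : TT δ i (TT η j P) = TT η j (TT δ i P) := by
  simp only [TT_eq, ← Module.End.mul_apply, ← map_mul, mul_comm]

/-- Translations by `δ` and `-δ` are inverse to each other. -/
lemma TT_sum (δ : ℚ) (k : ℕ) (P : Lam) :
    ∑ x ∈ Finset.HasAntidiagonal.antidiagonal k, TT δ x.1 (TT (-δ) x.2 P) =
      if k = 0 then P else 0 := by
  simp only [TT_eq, ← Module.End.mul_apply, ← map_mul]
  rw [← LinearMap.sum_apply, ← map_sum, sum_gen_mul]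
  split_ifs <;> simp

lemma TT_eq_zero (δ : ℚ) (i : ℕ) (P : Lam) (hi : wbound P < i) : TT δ i P = 0 := by
  refine Polynomial.coeff_eq_zero_of_natDegree_lt (lt_of_le_of_lt ?_ hi)
  rw [tau, aeval_def, eval₂_eq]
  refine Polynomial.natDegree_sum_le_of_forall_le _ _ fun α hα => ?_
  have hw : (α.sum fun i k => (i : ℕ) * k) ≤ wbound P :=
    Finset.le_sup (f := fun α : ℕ+ →₀ ℕ => α.sum fun i k => (i : ℕ) * k) hα
  refine le_trans ?_ hw
  rw [← Algebra.smul_def]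
  refine (Polynomial.natDegree_smul_le _ _).trans ((Polynomial.natDegree_prod_le _ _).trans ?_)
  refine Finset.sum_le_sum fun n _ => ?_
  refine Polynomial.natDegree_pow_le.trans ?_
  rw [mul_comm]
  refine Nat.mul_le_mul_right _ ?_
  refine Polynomial.natDegree_add_le_of_degree_le (by simp) ?_
  exact (Polynomial.natDegree_smul_le _ _).trans (by simp)

lemma TT_add (δ : ℚ) (i : ℕ) (P Q : Lam) : TT δ i (P + Q) = TT δ i P + TT δ i Q := by
  simp [TT]

lemma TT_finsum (δ : ℚ) (i : ℕ) {ι : Type*} (s : Finset ι) (f : ι → Lam) :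
    TT δ i (∑ j ∈ s, f j) = ∑ j ∈ s, TT δ i (f j) := by
  simp [TT]

lemma TT_neg_zero (ε : ℚ) (hε : ε * ε = 1) (k : ℤ) (P : Lam) :
    TT (-ε) 0 (genZ ε k * P) = genZ ε k * TT (-ε) 0 P := by
  simp [TT, tau_genZ_neg ε hε, sub_mul, mul_assoc]

lemma TT_neg_succ (ε : ℚ) (hε : ε * ε = 1) (k : ℤ) (i : ℕ) (P : Lam) :
    TT (-ε) (i + 1) (genZ ε k * P) =
      genZ ε k * TT (-ε) (i + 1) P - genZ ε (k - 1) * TT (-ε) i P := by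
  simp [TT, tau_genZ_neg ε hε, sub_mul, mul_assoc]

lemma TT_self_zero (ε : ℚ) (hε : ε * ε = 1) (k : ℤ) (P : Lam) :
    TT ε 0 (genZ ε k * P) = genZ ε k * TT ε 0 P := by
  have h := congrArg (fun Y => (Y * tau ε P).coeff 0) (tau_genZ_self ε hε k)
  simpa [TT, sub_mul, mul_assoc] using h

lemma TT_self_succ (ε : ℚ) (hε : ε * ε = 1) (k : ℤ) (i : ℕ) (P : Lam) :
    TT ε (i + 1) (genZ ε k * P) - TT ε i (genZ ε (k - 1) * P) =
      genZ ε k * TT ε (i + 1) P := by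
  have h := congrArg (fun Y => (Y * tau ε P).coeff (i + 1)) (tau_genZ_self ε hε k)
  simpa [TT, sub_mul, mul_assoc] using h

/-! ### The vertex operators and their products -/

lemma TT_zero (δ : ℚ) (i : ℕ) : TT δ i 0 = 0 := by simp [TT]

/-- The component `∑_j g_{j-a} · T_j` of the vertex operator of sign `ε`, with `g` the coefficients
of `exp (ε ∑ p_n zⁿ / n)` and `T_j` those of the translation by `-ε`. It is `S_a` for `ε = 1` and
`S*_{-a}` for `ε = -1`. -/
def VV (ε : ℚ) (a : ℤ) (P : Lam) : Lam :=
  ∑ j ∈ Finset.range (wbound P + 1), genZ ε ((j : ℤ) - a) * TT (-ε) j P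

lemma VV_eq (ε : ℚ) (a : ℤ) (P : Lam) (N : ℕ) (hN : wbound P < N) :
    VV ε a P = ∑ j ∈ Finset.range N, genZ ε ((j : ℤ) - a) * TT (-ε) j P := by
  refine Finset.sum_subset (Finset.range_subset_range.mpr hN) fun j _ hj => ?_
  rw [TT_eq_zero _ _ _ (by simpa using hj), mul_zero]

lemma Sop_eq (n : ℤ) (P : Lam) : Sop n P = VV 1 n P := by
  refine Finset.sum_congr rfl fun j _ => ?_
  split_ifs with h
  · rw [TT_eq, ← ee_eq, map_smul, LinearMap.smul_apply, mul_smul_comm, ← Dop_eq]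
    rfl
  · rw [genZ_neg _ (by omega), zero_mul]

lemma SstarOp_eq (n : ℤ) (P : Lam) : SstarOp n P = VV (-1) (-n) P := by
  refine Finset.sum_congr rfl fun j _ => ?_
  split_ifs with h
  · rw [TT_eq, neg_neg, ← hh_eq, ← Dop_eq, sub_neg_eq_add]
    obtain ⟨k, hk⟩ := Int.eq_ofNat_of_zero_le (show 0 ≤ (j : ℤ) + n by omega)
    rw [hk, genZ_natCast, ← ee_eq, zpow_natCast, smul_mul_assoc]
    simp [eZ]
  · rw [genZ_neg _ (by omega), zero_mul]

lemma VV_zero (ε : ℚ) (a : ℤ) : VV ε a 0 = 0 := by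
  simp [VV, TT_zero]

lemma VV_add (ε : ℚ) (a : ℤ) (P Q : Lam) : VV ε a (P + Q) = VV ε a P + VV ε a Q := by
  rw [VV_eq ε a P (wbound P + wbound Q + wbound (P + Q) + 1) (by omega),
    VV_eq ε a Q (wbound P + wbound Q + wbound (P + Q) + 1) (by omega),
    VV_eq ε a (P + Q) (wbound P + wbound Q + wbound (P + Q) + 1) (by omega),
    ← Finset.sum_add_distrib]
  simp only [TT_add, mul_add]

lemma VV_eq_zero (ε : ℚ) (a : ℤ) (P : Lam) (h : (wbound P : ℤ) < a) : VV ε a P = 0 := by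
  refine Finset.sum_eq_zero fun j hj => ?_
  have := Finset.mem_range.mp hj
  rw [genZ_neg _ (by omega), zero_mul]

/-- The normally ordered product of two vertex operator components. -/
def FF (σ ρ : ℚ) (a b : ℤ) (P : Lam) : Lam :=
  ∑ i ∈ Finset.range (wbound P + 1), ∑ j ∈ Finset.range (wbound P + 1),
    genZ σ ((i : ℤ) - a) * (genZ ρ ((j : ℤ) - b) * TT (-σ) i (TT (-ρ) j P))

lemma FF_eq (σ ρ : ℚ) (a b : ℤ) (P : Lam) (M N : ℕ) (hM : wbound P < M) (hN : wbound P < N) :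
    FF σ ρ a b P = ∑ i ∈ Finset.range M, ∑ j ∈ Finset.range N,
      genZ σ ((i : ℤ) - a) * (genZ ρ ((j : ℤ) - b) * TT (-σ) i (TT (-ρ) j P)) := by
  trans ∑ i ∈ Finset.range (wbound P + 1), ∑ j ∈ Finset.range N,
      genZ σ ((i : ℤ) - a) * (genZ ρ ((j : ℤ) - b) * TT (-σ) i (TT (-ρ) j P))
  · refine Finset.sum_congr rfl fun i _ => ?_
    refine Finset.sum_subset (Finset.range_subset_range.mpr hN) fun j _ hj => ?_
    rw [TT_eq_zero _ j _ (by simpa using hj), TT_zero, mul_zero, mul_zero]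
  · refine Finset.sum_subset (Finset.range_subset_range.mpr hM) fun i _ hi => ?_
    refine Finset.sum_eq_zero fun j _ => ?_
    rw [TT_comm, TT_eq_zero _ i _ (by simpa using hi), TT_zero, mul_zero, mul_zero]

lemma FF_comm (σ ρ : ℚ) (a b : ℤ) (P : Lam) : FF σ ρ a b P = FF ρ σ b a P := by
  rw [FF, FF, Finset.sum_comm]
  refine Finset.sum_congr rfl fun i _ => Finset.sum_congr rfl fun j _ => ?_
  rw [TT_comm, mul_left_comm]

/-- Wick reordering for equal signs, with contraction factor `1 - w / z`. -/
lemma VV_VV_same (ε : ℚ) (hε : ε * ε = 1) (a b : ℤ) (P : Lam) :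
    VV ε a (VV ε b P) = FF ε ε a b P - FF ε ε (a - 1) (b + 1) P := by
  obtain ⟨K, hK1, hK2⟩ : ∃ K, wbound P < K ∧ wbound (VV ε b P) < K + 1 :=
    ⟨wbound P + wbound (VV ε b P) + 1, by omega, by omega⟩
  rw [VV_eq ε a _ (K + 1) hK2, VV_eq ε b P K hK1, FF_eq ε ε a b P (K + 1) K (by omega) hK1,
    FF_eq ε ε _ _ P K K hK1 hK1, Finset.sum_range_succ', Finset.sum_range_succ' _ K]
  rw [add_sub_right_comm, ← Finset.sum_sub_distrib]
  congr 1
  · refine Finset.sum_congr rfl fun i _ => ?_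
    rw [TT_finsum, Finset.mul_sum, ← Finset.sum_sub_distrib]
    refine Finset.sum_congr rfl fun j _ => ?_
    rw [TT_neg_succ ε hε, mul_sub]
    congr 3
    · push_cast; ring
    · congr 1; ring
  · rw [TT_finsum, Finset.mul_sum]
    simp only [TT_neg_zero ε hε]

/-- Wick reordering for opposite signs, with the contraction factor `1 / (1 - w / z)` cleared. -/
lemma VV_VV_opp (ε : ℚ) (hε : ε * ε = 1) (a b : ℤ) (P : Lam) :
    VV ε a (VV (-ε) b P) - VV ε (a - 1) (VV (-ε) (b + 1) P) = FF ε (-ε) a b P := by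
  have hε' : (-ε) * (-ε) = 1 := by rw [neg_mul_neg, hε]
  obtain ⟨K, hK1, hK2, hK3⟩ : ∃ K, wbound P < K ∧ wbound (VV (-ε) b P) < K + 1 ∧
      wbound (VV (-ε) (b + 1) P) < K :=
    ⟨wbound P + wbound (VV (-ε) b P) + wbound (VV (-ε) (b + 1) P) + 1,
      by omega, by omega, by omega⟩
  rw [VV_eq ε a _ (K + 1) hK2, VV_eq ε (a - 1) _ K hK3, VV_eq (-ε) b P K hK1,
    VV_eq (-ε) (b + 1) P K hK1, FF_eq ε (-ε) a b P (K + 1) K (by omega) hK1,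
    Finset.sum_range_succ', Finset.sum_range_succ' _ K]
  rw [add_sub_right_comm, ← Finset.sum_sub_distrib]
  congr 1
  · refine Finset.sum_congr rfl fun i _ => ?_
    have e : (i : ℤ) - (a - 1) = ((i + 1 : ℕ) : ℤ) - a := by push_cast; ring
    rw [e, ← mul_sub, TT_finsum, TT_finsum, ← Finset.sum_sub_distrib, Finset.mul_sum]
    refine Finset.sum_congr rfl fun j _ => ?_
    have e' : (j : ℤ) - (b + 1) = (j : ℤ) - b - 1 := by ring
    rw [e', TT_self_succ (-ε) hε']
  · rw [TT_finsum, Finset.mul_sum]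
    simp only [TT_self_zero (-ε) hε']

/-- The geometric expansion of the contraction factor `1 / (1 - w / z)`; it is finite because
`VV (-ε) b P` vanishes for large `b`. -/
lemma VV_VV_opp_sum (ε : ℚ) (hε : ε * ε = 1) (a b : ℤ) (P : Lam) (L : ℕ)
    (hL : (wbound P : ℤ) < b + L) :
    VV ε a (VV (-ε) b P) = ∑ l ∈ Finset.range L, FF ε (-ε) (a - l) (b + l) P := by
  have h : ∀ M : ℕ, VV ε a (VV (-ε) b P) = ∑ l ∈ Finset.range M, FF ε (-ε) (a - l) (b + l) P +
      VV ε (a - M) (VV (-ε) (b + M) P) := by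
    intro M
    induction M with
    | zero => simp
    | succ M ih =>
      rw [ih, Finset.sum_range_succ, ← VV_VV_opp ε hε]
      push_cast
      rw [sub_sub, add_assoc b]
      abel
  rw [h L, VV_eq_zero (-ε) _ P hL, VV_zero, add_zero]

/-- The identity `∑_u g_u g'_{k-u} = δ_{k,0}`, the sum running over an interval `[c - L, c + L)`
that contains `[0, k]`, split at `c`. -/
lemma sum_genZ (ε : ℚ) (c k : ℤ) (L : ℕ) (h1 : c ≤ L) (h2 : k < c + L) :
    ∑ l ∈ Finset.range L, genZ ε (c + l) * genZ (-ε) (k - (c + l)) +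
      ∑ l ∈ Finset.range L, genZ ε (c - 1 - l) * genZ (-ε) (k - (c - 1 - l)) =
    if k = 0 then 1 else 0 := by
  have h : ∀ (g : ℤ → Lam) (M : ℕ), ∑ l ∈ Finset.range M, g (c + l) +
      ∑ l ∈ Finset.range M, g (c - 1 - l) = ∑ u ∈ Finset.Ico (c - M) (c + M), g u := by
    intro g M
    induction M with
    | zero => simp
    | succ M ih =>
      rw [Finset.sum_range_succ, Finset.sum_range_succ, add_add_add_comm, ih]
      have e : Finset.Ico (c - ((M + 1 : ℕ) : ℤ)) (c + ((M + 1 : ℕ) : ℤ)) =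
          insert (c + (M : ℤ)) (insert (c - 1 - (M : ℤ)) (Finset.Ico (c - (M : ℤ)) (c + M))) := by
        ext u
        simp only [Finset.mem_insert, Finset.mem_Ico]
        push_cast
        omega
      rw [e, Finset.sum_insert, Finset.sum_insert]
      · abel
      · simp
      · simp
        omega
  rw [h fun u => genZ ε u * genZ (-ε) (k - u)]
  rcases lt_or_ge k 0 with hk | hk
  · rw [if_neg (by omega)]
    refine Finset.sum_eq_zero fun u _ => ?_
    rcases lt_or_ge u 0 with hu | hu
    · rw [genZ_neg _ hu, zero_mul]
    · rw [genZ_neg (-ε) (show k - u < 0 by omega), mul_zero]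
  · lift k to ℕ using hk
    have h3 := sum_gen_mul ε k
    rw [Finset.Nat.sum_antidiagonal_eq_sum_range_succ_mk] at h3
    simp only [Nat.cast_eq_zero]
    rw [← h3]
    symm
    refine Finset.sum_of_injOn (fun n : ℕ => (n : ℤ)) (by simp) ?_ ?_ ?_
    · intro n hn
      simp only [Finset.coe_range, Set.mem_Iio, Finset.coe_Ico, Set.mem_Ico] at hn ⊢
      omega
    · intro u _ hu
      rcases lt_or_ge u 0 with hu0 | hu0
      · rw [genZ_neg _ hu0, zero_mul]
      · rw [genZ_neg (-ε), mul_zero]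
        by_contra hcon
        apply hu
        refine ⟨u.toNat, ?_, by simpa using hu0⟩
        simp only [Finset.coe_range, Set.mem_Iio]
        omega
    · intro n hn
      have hn' : n ≤ k := Nat.lt_succ_iff.mp (Finset.mem_range.mp hn)
      dsimp only
      rw [genZ_natCast, ← Nat.cast_sub hn', genZ_natCast]

/-- The mixed relation. The two geometric expansions (of `1 / (1 - w / z)` in either direction)
add up to the formal delta function, which collapses the normally ordered product to the
identity. -/
lemma VV_VV_mixed (ε : ℚ) (hε : ε * ε = 1) (a b : ℤ) (P : Lam) :
    VV ε a (VV (-ε) b P) + VV (-ε) (b - 1) (VV ε (a + 1) P) = if a + b = 0 then P else 0 := by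
  have hε' : (-ε) * (-ε) = 1 := by rw [neg_mul_neg, hε]
  obtain ⟨N, hN1, hN2⟩ : ∃ N : ℕ, wbound P < N ∧ a + b < N :=
    ⟨wbound P + 1 + (a + b).toNat, by omega, by omega⟩
  obtain ⟨L, hL1, hL2⟩ : ∃ L : ℕ, (N : ℤ) - a < L ∧ (N : ℤ) - b < L :=
    ⟨((N : ℤ) - a).toNat + ((N : ℤ) - b).toNat + 1, by omega, by omega⟩
  have h2 := VV_VV_opp_sum (-ε) hε' (b - 1) (a + 1) P L (by omega)
  rw [neg_neg] at h2
  rw [VV_VV_opp_sum ε hε a b P L (by omega), h2]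
  simp only [FF_comm (-ε) ε]
  simp only [FF_eq ε (-ε) _ _ P N N hN1 hN1]
  have h3 : ∀ i ∈ Finset.range N, ∀ j ∈ Finset.range N,
      ∑ l ∈ Finset.range L, genZ ε ((i : ℤ) - (a - l)) *
          (genZ (-ε) ((j : ℤ) - (b + l)) * TT (-ε) i (TT (-(-ε)) j P)) +
        ∑ l ∈ Finset.range L, genZ ε ((i : ℤ) - (a + 1 + l)) *
          (genZ (-ε) ((j : ℤ) - (b - 1 - l)) * TT (-ε) i (TT (-(-ε)) j P)) =
      if (i : ℤ) + j = a + b then TT (-ε) i (TT (-(-ε)) j P) else 0 := by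
    intro i hi j hj
    have hi' := Finset.mem_range.mp hi
    have hj' := Finset.mem_range.mp hj
    have h4 := sum_genZ ε (i - a) (i + j - a - b) L (by omega) (by omega)
    have h5 := congrArg (· * TT (-ε) i (TT (-(-ε)) j P)) h4
    simp only [add_mul, Finset.sum_mul, ite_mul, one_mul, zero_mul] at h5
    have e : ((i : ℤ) + j - a - b = 0) = ((i : ℤ) + j = a + b) := by
      apply propext; omega
    simp only [e] at h5
    rw [← h5]
    congr 1
    · refine Finset.sum_congr rfl fun l _ => ?_
      rw [mul_assoc, show (i : ℤ) - (a - l) = i - a + l by ring,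
        show (j : ℤ) - (b + l) = i + j - a - b - (i - a + l) by ring]
    · refine Finset.sum_congr rfl fun l _ => ?_
      rw [mul_assoc, show (i : ℤ) - (a + 1 + l) = i - a - 1 - l by ring,
        show (j : ℤ) - (b - 1 - l) = i + j - a - b - (i - a - 1 - l) by ring]
  have h6 : ∀ f : ℕ → ℕ → ℕ → Lam, ∑ l ∈ Finset.range L, ∑ i ∈ Finset.range N,
      ∑ j ∈ Finset.range N, f l i j = ∑ i ∈ Finset.range N, ∑ j ∈ Finset.range N,
        ∑ l ∈ Finset.range L, f l i j := by
    intro f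
    rw [Finset.sum_comm]
    exact Finset.sum_congr rfl fun i _ => Finset.sum_comm
  rw [h6, h6, ← Finset.sum_add_distrib]
  simp only [← Finset.sum_add_distrib]
  rw [Finset.sum_congr rfl fun i hi => Finset.sum_congr rfl fun j hj =>
    (Finset.sum_add_distrib ..).trans (h3 i hi j hj)]
  rcases lt_or_ge (a + b) 0 with hk | hk
  · rw [if_neg (by omega)]
    refine Finset.sum_eq_zero fun i _ => Finset.sum_eq_zero fun j _ => ?_
    rw [if_neg (by omega)]
  · obtain ⟨k, hk⟩ := Int.eq_ofNat_of_zero_le hk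
    have h7 := TT_sum (-ε) k P
    simp only [hk, Nat.cast_eq_zero]
    rw [← h7, ← Finset.sum_product', ← Finset.sum_filter]
    refine Finset.sum_congr ?_ fun _ _ => rfl
    ext x
    simp only [Finset.mem_filter, Finset.mem_product, Finset.mem_range,
      Finset.HasAntidiagonal.mem_antidiagonal]
    omega

/-! ### Passing to `Λ ⊗ ℚ[ℤα]` -/

lemma Sbar_single (r m : ℤ) (P : Lam) :
    Sbar r (Finsupp.single m P) = Finsupp.single (m + 1) (VV 1 (r + m + 1) P) := by
  rw [Sbar, Finsupp.sum_single_index, Sop_eq]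
  rw [Sop_eq, VV_zero, Finsupp.single_zero]

lemma SbarStar_single (r m : ℤ) (P : Lam) :
    SbarStar r (Finsupp.single m P) = Finsupp.single (m - 1) (VV (-1) (-(r + m)) P) := by
  rw [SbarStar, Finsupp.sum_single_index, SstarOp_eq]
  rw [SstarOp_eq, VV_zero, Finsupp.single_zero]

lemma Sbar_add (r : ℤ) (v w : VSp) : Sbar r (v + w) = Sbar r v + Sbar r w := by
  refine Finsupp.sum_add_index' (fun m => ?_) fun m P Q => ?_
  · rw [Sop_eq, VV_zero, Finsupp.single_zero]
  · simp only [Sop_eq, VV_add, Finsupp.single_add]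

lemma SbarStar_add (r : ℤ) (v w : VSp) : SbarStar r (v + w) = SbarStar r v + SbarStar r w := by
  refine Finsupp.sum_add_index' (fun m => ?_) fun m P Q => ?_
  · rw [SstarOp_eq, VV_zero, Finsupp.single_zero]
  · simp only [SstarOp_eq, VV_add, Finsupp.single_add]

lemma Sbar_zero (r : ℤ) : Sbar r 0 = 0 := Finsupp.sum_zero_index

lemma SbarStar_zero (r : ℤ) : SbarStar r 0 = 0 := Finsupp.sum_zero_index

/-- Like-sign anticommutation: the normally ordered products cancel in pairs by symmetry. -/
lemma VV_VV_anti (ε : ℚ) (hε : ε * ε = 1) (a b : ℤ) (P : Lam) :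
    VV ε a (VV ε b P) + VV ε (b + 1) (VV ε (a - 1) P) = 0 := by
  rw [VV_VV_same ε hε, VV_VV_same ε hε, FF_comm ε ε (b + 1), FF_comm ε ε (b + 1 - 1),
    sub_add_cancel, add_sub_cancel_right]
  abel

/-- the Clifford algebra (fermionic anticommutation) relations for the
modified (charged) vertex operators on `Λ ⊗ ℚ[ℤα]`, for half-integers `m = r + 1/2`,
`n = s + 1/2` (`r, s : ℤ`):
`S̄_m S̄_n + S̄_n S̄_m = 0`, `S̄*_m S̄*_n + S̄*_n S̄*_m = 0`, and
`S̄_m S̄*_n + S̄*_n S̄_m = δ_{m,n} · id`. -/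
theorem charged_vertex_clifford_relations (r s : ℤ) (w : VSp) :
    Sbar r (Sbar s w) + Sbar s (Sbar r w) = 0 ∧
    SbarStar r (SbarStar s w) + SbarStar s (SbarStar r w) = 0 ∧
    Sbar r (SbarStar s w) + SbarStar s (Sbar r w) = (if r = s then w else 0) := by
  refine ⟨?_, ?_, ?_⟩
  · induction w using Finsupp.induction_linear with
    | zero => simp only [Sbar_zero, add_zero]
    | add v w hv hw =>
      simp only [Sbar_add]
      rw [add_add_add_comm, hv, hw, add_zero]
    | single m P =>
      simp only [Sbar_single]
      rw [← Finsupp.single_add]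
      have h := VV_VV_anti 1 (by norm_num) (r + (m + 1) + 1) (s + m + 1) P
      rw [show s + m + 1 + 1 = s + (m + 1) + 1 by ring,
        show r + (m + 1) + 1 - 1 = r + m + 1 by ring] at h
      rw [h, Finsupp.single_zero]
  · induction w using Finsupp.induction_linear with
    | zero => simp only [SbarStar_zero, add_zero]
    | add v w hv hw =>
      simp only [SbarStar_add]
      rw [add_add_add_comm, hv, hw, add_zero]
    | single m P =>
      simp only [SbarStar_single]
      rw [← Finsupp.single_add]
      have h := VV_VV_anti (-1) (by norm_num) (-(r + (m - 1))) (-(s + m)) P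
      rw [show -(s + m) + 1 = -(s + (m - 1)) by ring,
        show -(r + (m - 1)) - 1 = -(r + m) by ring] at h
      rw [h, Finsupp.single_zero]
  · induction w using Finsupp.induction_linear with
    | zero => simp only [Sbar_zero, SbarStar_zero, add_zero, ite_self]
    | add v w hv hw =>
      simp only [Sbar_add, SbarStar_add]
      rw [add_add_add_comm, hv, hw]
      split_ifs <;> simp
    | single m P =>
      simp only [Sbar_single, SbarStar_single]
      rw [sub_add_cancel, add_sub_cancel_right, ← Finsupp.single_add]
      have h := VV_VV_mixed 1 (by norm_num) (r + m) (-(s + m)) P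
      rw [show -(s + m) - 1 = -(s + (m + 1)) by ring] at h
      rw [show r + (m - 1) + 1 = r + m by ring, h]
      by_cases hrs : r = s
      · rw [if_pos (by omega), if_pos hrs]
      · rw [if_neg (by omega), if_neg hrs, Finsupp.single_zero]
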